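/- Let G = (V,E) be a finite multigraph with an arbitrary orientation of its edges and incidence matrix ε (with ε_{ev} = 0 for self-loops), edge variables α_e > 0 and vertex weights q_v. Let H be the V×V discrete Schrödinger matrix H_{v,v'} = Σ_{e∈E} (1/α_e) ε_{ev} ε_{ev'} + q_v δ_{v,v'}. Then (Π_{e∈E} α_e) · det H = 𝒰_G(α,q) = Σ_{F spanning forest of G} Π_{e∉F} α_e Π_{C component of F} q_C. -/

import Mathlib

/-!
The determinant and the forest sum satisfy the same deletion–contraction recursion in the edges.
Put `x e = 1 / α e` and restrict the edge sum in `H` to a finite set `s` of edges; the claim becomes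
`det H_s = ∑ ∏_{e ∈ A} x e * ∏_C q_C`, summed over the forests `A ⊆ s`, proved for all vertex
types at once by induction on `s` (`Multigraph.det_edgeMat`).

* Determinant side. For an edge `e` from `a` to `b ≠ a`, adding row `a` to row `b` and column `a`
  to column `b` turns the rank-one term `x e • ε_e ε_eᵀ` into a single diagonal entry at `a`. Hence
  `det H_{s ∪ e} = det H_s + x e * det H'`, where `H'` is the minor without `a`, which is the
  matrix of the contracted graph with weight `q a + q b` at the merged vertex
  (`det_add_smul_vecMulVec`, `Multigraph.edgeMat_merge`).
* Forest side. Forests containing `e` correspond to forests of the contracted graph, with the same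
  components and component weights (`Multigraph.isForest_insert_iff`,
  `Multigraph.prod_qComp_merge`). Here `A` is a forest exactly when the endpoints of each edge
  `e ∈ A` are disconnected in `A \ e` (`Multigraph.k_erase_ne_iff`).
-/

open Finset

attribute [local instance] Classical.propDecidable

/-- A finite multigraph: vertex type `V`, edge type `E`, each edge carrying an
ordered pair of (possibly equal) endpoints (the order is an arbitrary orientation). -/
structure Multigraph (V E : Type) where
  ends : E → V × V

namespace Multigraph

variable {V E Fl : Type} {d : ℕ}

/-- `v` and `w` are joined by an edge of `A`. -/
def edgeRel (G : Multigraph V E) (A : Finset E) (v w : V) : Prop :=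
  ∃ e ∈ A, G.ends e = (v, w) ∨ G.ends e = (w, v)

/-- The partition of `V` into connected components of the spanning subgraph `(V, A)`. -/
def compSetoid (G : Multigraph V E) (A : Finset E) : Setoid V :=
  Relation.EqvGen.setoid (G.edgeRel A)

/-- `v` and `w` lie in the same connected component of the spanning subgraph `(V, A)`. -/
def Reach (G : Multigraph V E) (A : Finset E) (v w : V) : Prop :=
  Relation.EqvGen (G.edgeRel A) v w

/-- `k A`: the number of connected components of the spanning subgraph `(V, A)`. -/
noncomputable def k (G : Multigraph V E) (A : Finset E) : ℕ :=
  Nat.card (Quotient (G.compSetoid A))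

/-- The rank `r(A) = |V| - k(A)` of the spanning subgraph `(V, A)`. -/
noncomputable def rank (G : Multigraph V E) (A : Finset E) : ℕ :=
  Nat.card V - G.k A

/-- The nullity `n(A) = |A| + k(A) - |V|` of the spanning subgraph `(V, A)`. -/
noncomputable def nullity (G : Multigraph V E) (A : Finset E) : ℕ :=
  A.card + G.k A - Nat.card V

/-- A self-loop: both endpoints coincide. -/
def IsLoop (G : Multigraph V E) (e : E) : Prop :=
  (G.ends e).1 = (G.ends e).2

/-- A bridge: deleting the edge increases the number of connected components. -/
def IsBridge (G : Multigraph V E) [Fintype E] (e : E) : Prop :=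
  G.k (Finset.univ.erase e) ≠ G.k Finset.univ

/-- The Tutte polynomial, via the subset (rank–nullity) expansion. -/
noncomputable def tutte (G : Multigraph V E) [Fintype E] (x y : ℝ) : ℝ :=
  ∑ A : Finset E,
    (x - 1) ^ (G.rank Finset.univ - G.rank A) * (y - 1) ^ G.nullity A

/-- Deletion of the edge `e`. -/
def delete (G : Multigraph V E) (e : E) : Multigraph V {e' : E // e' ≠ e} :=
  ⟨fun e' => G.ends e'⟩

/-- The setoid identifying the two endpoints of `e`. -/
def contrSetoid (G : Multigraph V E) (e : E) : Setoid V :=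
  Relation.EqvGen.setoid (fun v w => G.ends e = (v, w))

/-- Contraction of the edge `e`: its endpoints are identified and `e` is removed.
(For a self-loop this yields a graph isomorphic to the deletion `G - e`,
in accordance with the convention `G/e = G - e` for self-loops.) -/
def contract (G : Multigraph V E) (e : E) :
    Multigraph (Quotient (G.contrSetoid e)) {e' : E // e' ≠ e} :=
  ⟨fun e' => (Quotient.mk _ (G.ends e'.1).1, Quotient.mk _ (G.ends e'.1).2)⟩

/-- The multivariate Tutte polynomial `Z_G(q, β)`. -/
noncomputable def multiTutte (G : Multigraph V E) [Fintype E] (q : ℝ) (β : E → ℝ) : ℝ :=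
  ∑ A : Finset E, q ^ G.k A * ∏ e ∈ A, β e

/-- `(V, A)` is acyclic (a forest): every edge of `A` is a bridge of `(V, A)`. -/
def IsForest (G : Multigraph V E) [DecidableEq E] (A : Finset E) : Prop :=
  ∀ e ∈ A, G.k (A.erase e) ≠ G.k A

/-- First Symanzik polynomial: sum over spanning trees `T` of `∏_{e ∉ T} α_e`. -/
noncomputable def treePoly (G : Multigraph V E) [Fintype E] [DecidableEq E] (α : E → ℝ) : ℝ :=
  ∑ A ∈ Finset.univ.filter (fun A => G.IsForest A ∧ G.k A = 1),
    ∏ e ∈ Finset.univ \ A, α e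

/-- The total weight `q_C` of the component `c` of the spanning subgraph `(V, A)`. -/
noncomputable def qComp (G : Multigraph V E) [Fintype V] (A : Finset E) (q : V → ℝ)
    (c : Quotient (G.compSetoid A)) : ℝ :=
  ∑ v ∈ Finset.univ.filter (fun v => Quotient.mk (G.compSetoid A) v = c), q v

/-- Generalized first Symanzik polynomial `𝒰_G(α, q)`. -/
noncomputable def genU (G : Multigraph V E) [Fintype V] [Fintype E] [DecidableEq E]
    (α : E → ℝ) (q : V → ℝ) : ℝ :=
  ∑ A ∈ Finset.univ.filter (fun A => G.IsForest A),
    (∏ e ∈ Finset.univ \ A, α e) * ∏ c : Quotient (G.compSetoid A), G.qComp A q c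

end Multigraph

/-- Euclidean dot product on `ℝ^d`. -/
def dotp {d : ℕ} (x y : Fin d → ℝ) : ℝ := ∑ i, x i * y i

/-- Total flag momentum `p_v` at the vertex `v`. -/
noncomputable def flagP {V Fl : Type} {d : ℕ} [Fintype Fl] (attach : Fl → V)
    (p : Fl → Fin d → ℝ) (v : V) : Fin d → ℝ :=
  ∑ f ∈ Finset.univ.filter (fun f => attach f = v), p f

namespace Multigraph

/-- Total momentum `p_C` of the component `c` of the spanning subgraph `(V, A)`. -/
noncomputable def pComp (G : Multigraph V E) [Fintype Fl] (A : Finset E) (attach : Fl → V)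
    (p : Fl → Fin d → ℝ) (c : Quotient (G.compSetoid A)) : Fin d → ℝ :=
  ∑ f ∈ Finset.univ.filter (fun f => Quotient.mk (G.compSetoid A) (attach f) = c), p f

/-- Generalized second Symanzik polynomial `𝒱_G(α, q, p)`. -/
noncomputable def genV (G : Multigraph V E) [Fintype V] [Fintype E] [DecidableEq E] [Fintype Fl]
    (α : E → ℝ) (q : V → ℝ) (attach : Fl → V) (p : Fl → Fin d → ℝ) : ℝ :=
  ∑ A ∈ Finset.univ.filter (fun A => G.IsForest A),
    (∏ e ∈ Finset.univ \ A, α e) *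
      ∑ c : Quotient (G.compSetoid A),
        dotp (G.pComp A attach p c) (G.pComp A attach p c) *
          ∏ c' ∈ Finset.univ.erase c, G.qComp A q c'

/-- Adding one new edge joining `v` and `v'`. -/
def addEdge (G : Multigraph V E) (v v' : V) : Multigraph V (Option E) :=
  ⟨fun e => e.elim (v, v') G.ends⟩

/-- Signed incidence matrix `ε_{ev}` (vanishing on self-loops). -/
noncomputable def eps (G : Multigraph V E) (e : E) (v : V) : ℝ :=
  (if (G.ends e).1 = v then 1 else 0) - (if (G.ends e).2 = v then 1 else 0)

end Multigraph


namespace Multigraph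
/-- The discrete Schrödinger operator `H = Δ + V` on the vertices:
`H_{v,v'} = Σ_e (1/α_e) ε_{ev} ε_{ev'} + q_v δ_{v,v'}`. -/
noncomputable def HMat (G : Multigraph V E) [Fintype E] (α : E → ℝ) (q : V → ℝ) :
    Matrix V V ℝ :=
  Matrix.of fun v v' =>
    (∑ e : E, (1 / α e) * G.eps e v * G.eps e v') + (if v = v' then q v else 0)
end Multigraph

/-! ### Connectivity -/

namespace Multigraph

variable {V E : Type}

lemma reach_refl (G : Multigraph V E) (A : Finset E) (v : V) : G.Reach A v v :=
  Relation.EqvGen.refl v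

lemma Reach.symm {G : Multigraph V E} {A : Finset E} {v w : V} (h : G.Reach A v w) :
    G.Reach A w v :=
  Relation.EqvGen.symm _ _ h

lemma Reach.trans {G : Multigraph V E} {A : Finset E} {u v w : V} (h : G.Reach A u v)
    (h' : G.Reach A v w) : G.Reach A u w :=
  Relation.EqvGen.trans _ _ _ h h'

lemma reach_of_mem {G : Multigraph V E} {A : Finset E} {e : E} (he : e ∈ A) :
    G.Reach A (G.ends e).1 (G.ends e).2 :=
  Relation.EqvGen.rel _ _ ⟨e, he, Or.inl rfl⟩

/-- Induction principle: an equivalence relation containing every edge of `A` contains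
reachability in `A`. -/
lemma Reach.induct {G : Multigraph V E} {A : Finset E} {r : V → V → Prop} (hr : Equivalence r)
    (h : ∀ e ∈ A, r (G.ends e).1 (G.ends e).2) {v w : V} (hvw : G.Reach A v w) : r v w := by
  induction hvw with
  | rel x y hxy =>
    obtain ⟨e, he, h1 | h1⟩ := hxy
    · simpa [h1] using h e he
    · simpa [h1] using hr.symm (h e he)
  | refl x => exact hr.refl x
  | symm x y _ ih => exact hr.symm ih
  | trans x y z _ _ ih1 ih2 => exact hr.trans ih1 ih2

lemma reach_equivalence (G : Multigraph V E) (A : Finset E) : Equivalence (G.Reach A) :=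
  ⟨G.reach_refl A, Reach.symm, Reach.trans⟩

lemma Reach.mono {G : Multigraph V E} {A B : Finset E} (hAB : A ⊆ B) {v w : V}
    (h : G.Reach A v w) : G.Reach B v w :=
  h.induct (G.reach_equivalence B) fun _ he => reach_of_mem (hAB he)

lemma mk_eq_mk_iff {G : Multigraph V E} {A : Finset E} {v w : V} :
    Quotient.mk (G.compSetoid A) v = Quotient.mk (G.compSetoid A) w ↔ G.Reach A v w :=
  Quotient.eq

/-- A path in `(V, insert e A)` either avoids `e` or may be taken to cross it exactly once. -/
lemma reach_insert {G : Multigraph V E} {A : Finset E} {e : E} {v w : V}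
    (h : G.Reach (insert e A) v w) :
    G.Reach A v w ∨ (G.Reach A v (G.ends e).1 ∧ G.Reach A (G.ends e).2 w) ∨
      (G.Reach A v (G.ends e).2 ∧ G.Reach A (G.ends e).1 w) := by
  refine h.induct (r := fun v w => G.Reach A v w ∨
    (G.Reach A v (G.ends e).1 ∧ G.Reach A (G.ends e).2 w) ∨
      (G.Reach A v (G.ends e).2 ∧ G.Reach A (G.ends e).1 w)) ⟨?_, ?_, ?_⟩ ?_
  · exact fun x => Or.inl (G.reach_refl A x)
  · rintro x y (h | ⟨h, h'⟩ | ⟨h, h'⟩)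
    · exact Or.inl h.symm
    · exact Or.inr (Or.inr ⟨h'.symm, h.symm⟩)
    · exact Or.inr (Or.inl ⟨h'.symm, h.symm⟩)
  · rintro x y z (h | ⟨h, h'⟩ | ⟨h, h'⟩) (k | ⟨k, k'⟩ | ⟨k, k'⟩)
    · exact Or.inl (h.trans k)
    · exact Or.inr (Or.inl ⟨h.trans k, k'⟩)
    · exact Or.inr (Or.inr ⟨h.trans k, k'⟩)
    · exact Or.inr (Or.inl ⟨h, h'.trans k⟩)
    · exact Or.inr (Or.inl ⟨h, k'⟩)
    · exact Or.inl (h.trans k')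
    · exact Or.inr (Or.inr ⟨h, h'.trans k⟩)
    · exact Or.inl (h.trans k')
    · exact Or.inr (Or.inr ⟨h, k'⟩)
  · intro e' he'
    rcases Finset.mem_insert.1 he' with rfl | he'
    · exact Or.inr (Or.inl ⟨G.reach_refl A _, G.reach_refl A _⟩)
    · exact Or.inl (reach_of_mem he')

/-- An edge of `A` is a bridge of `(V, A)` iff its endpoints are disconnected without it. -/
lemma k_erase_ne_iff [Finite V] (G : Multigraph V E) {A : Finset E} {e : E} (he : e ∈ A) :
    G.k (A.erase e) ≠ G.k A ↔ ¬ G.Reach (A.erase e) (G.ends e).1 (G.ends e).2 := by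
  refine not_congr ⟨fun h => ?_, fun h => ?_⟩
  · -- The canonical surjection between the component sets is injective when they have equal size.
    let φ : Quotient (G.compSetoid (A.erase e)) → Quotient (G.compSetoid A) :=
      Quotient.map id fun _ _ h => Reach.mono (Finset.erase_subset e A) h
    have hφ : Function.Surjective φ := by
      intro c
      induction c using Quotient.inductionOn with
      | h v => exact ⟨Quotient.mk _ v, rfl⟩
    have hb : Function.Bijective φ := (Nat.bijective_iff_surjective_and_card φ).2 ⟨hφ, h⟩
    exact mk_eq_mk_iff.1 (hb.1 (mk_eq_mk_iff.2 (reach_of_mem he) :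
      φ (Quotient.mk _ (G.ends e).1) = φ (Quotient.mk _ (G.ends e).2)))
  · have hs : G.compSetoid (A.erase e) = G.compSetoid A := by
      ext v w
      refine ⟨fun h => Reach.mono (Finset.erase_subset e A) h, fun h' => ?_⟩
      refine Reach.induct (G.reach_equivalence (A.erase e)) (fun e' he' => ?_) h'
      by_cases hee : e' = e
      · exact hee ▸ h
      · exact reach_of_mem (Finset.mem_erase.2 ⟨hee, he'⟩)
    unfold k
    rw [hs]

lemma isForest_iff [Finite V] (G : Multigraph V E) {A : Finset E} :
    G.IsForest A ↔ ∀ e ∈ A, ¬ G.Reach (A.erase e) (G.ends e).1 (G.ends e).2 :=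
  forall₂_congr fun _ he => G.k_erase_ne_iff he

/-! ### Contracting an edge -/

/-- The map identifying `a` with `b`, the merged vertex being represented by `b`. -/
noncomputable def mergeMap (a b : V) (hab : b ≠ a) (v : V) : {w : V // w ≠ a} :=
  if h : v = a then ⟨b, hab⟩ else ⟨v, h⟩

/-- The graph obtained by identifying the vertex `a` with `b`. No edge is removed, so that the
edge type stays the same; an edge between `a` and `b` becomes a self-loop. -/
noncomputable def merge (G : Multigraph V E) (a b : V) (hab : b ≠ a) :
    Multigraph {w : V // w ≠ a} E :=
  ⟨fun e => (mergeMap a b hab (G.ends e).1, mergeMap a b hab (G.ends e).2)⟩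

/-- The vertex weights after identifying `a` with `b`: the merged vertex carries `q a + q b`. -/
noncomputable def mergeQ (q : V → ℝ) (a b : V) (w : {w : V // w ≠ a}) : ℝ :=
  q w + if (w : V) = b then q a else 0

/-- Contracting `e` has the same effect on connectivity as adding `e` to the edge set. -/
lemma reach_merge_iff (G : Multigraph V E) {A : Finset E} {e : E} {a b : V} (hab : b ≠ a)
    (he : G.ends e = (a, b)) {v w : V} :
    (G.merge a b hab).Reach A (mergeMap a b hab v) (mergeMap a b hab w) ↔
      G.Reach (insert e A) v w := by
  have hba : G.Reach (insert e A) a b := by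
    simpa [he] using reach_of_mem (G := G) (Finset.mem_insert_self e A)
  have key : ∀ v, G.Reach (insert e A) v (mergeMap a b hab v : {w : V // w ≠ a}) := by
    intro v
    unfold mergeMap
    split_ifs with h
    · exact h ▸ hba
    · exact G.reach_refl _ v
  constructor
  · intro h
    have : G.Reach (insert e A) (mergeMap a b hab v : {w : V // w ≠ a})
        (mergeMap a b hab w : {w : V // w ≠ a}) := by
      refine Reach.induct (r := fun x y : {w : V // w ≠ a} => G.Reach (insert e A) x y)
        ⟨fun x => G.reach_refl _ _, Reach.symm, Reach.trans⟩ (fun e' he' => ?_) h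
      exact ((key _).symm.trans (reach_of_mem (Finset.mem_insert_of_mem he'))).trans (key _)
    exact ((key v).trans this).trans (key w).symm
  · intro h
    refine Reach.induct (r := fun x y => (G.merge a b hab).Reach A (mergeMap a b hab x)
      (mergeMap a b hab y)) ⟨fun x => reach_refl _ _ _, Reach.symm, Reach.trans⟩
      (fun e' he' => ?_) h
    rcases Finset.mem_insert.1 he' with rfl | he'
    · have : mergeMap a b hab a = mergeMap a b hab b := by simp [mergeMap, hab]
      rw [he, this]
      exact reach_refl _ _ _
    · exact reach_of_mem (G := G.merge a b hab) he'

/-- If the endpoints of `e` are already connected in `B`, then some edge of a minimal connecting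
subset of `B` closes a cycle in the contracted graph. -/
lemma exists_reach_merge (G : Multigraph V E) {e : E} {a b : V} (hab : b ≠ a)
    (he : G.ends e = (a, b)) (B : Finset E) (h : G.Reach B a b) :
    ∃ e' ∈ B, (G.merge a b hab).Reach (B.erase e')
      ((G.merge a b hab).ends e').1 ((G.merge a b hab).ends e').2 := by
  induction B using Finset.induction_on with
  | empty =>
    exact absurd (h.induct (r := Eq) eq_equivalence (by simp)) hab.symm
  | insert c B hc ih =>
    by_cases hB : G.Reach B a b
    · obtain ⟨e', he', h'⟩ := ih hB
      exact ⟨e', Finset.mem_insert_of_mem he',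
        h'.mono (Finset.erase_subset_erase _ (Finset.subset_insert c B))⟩
    · refine ⟨c, Finset.mem_insert_self c B, ?_⟩
      rw [Finset.erase_insert hc]
      refine (reach_merge_iff G hab he).2 ?_
      have hs : B ⊆ insert e B := Finset.subset_insert e B
      have hab' : G.Reach (insert e B) a b := by
        simpa [he] using reach_of_mem (G := G) (Finset.mem_insert_self e B)
      rcases reach_insert h with h | ⟨h1, h2⟩ | ⟨h1, h2⟩
      · exact absurd h hB
      · exact ((h1.mono hs).symm.trans hab').trans (h2.mono hs).symm
      · exact ((h2.mono hs).trans hab'.symm).trans (h1.mono hs)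

lemma isForest_insert_iff [Finite V] (G : Multigraph V E) {B : Finset E} {e : E} {a b : V}
    (hab : b ≠ a) (he : G.ends e = (a, b)) (heB : e ∉ B) :
    G.IsForest (insert e B) ↔ (G.merge a b hab).IsForest B := by
  rw [isForest_iff, isForest_iff]
  have key : ∀ e' ∈ B, (G.Reach ((insert e B).erase e') (G.ends e').1 (G.ends e').2 ↔
      (G.merge a b hab).Reach (B.erase e')
        ((G.merge a b hab).ends e').1 ((G.merge a b hab).ends e').2) := by
    intro e' he'
    have hne : e ≠ e' := by
      rintro rfl
      exact heB he'
    rw [Finset.erase_insert_of_ne hne]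
    exact (reach_merge_iff G hab he).symm
  constructor
  · exact fun h e' he' => fun h' =>
      h e' (Finset.mem_insert_of_mem he') ((key e' he').2 h')
  · intro h e' he'
    rcases Finset.mem_insert.1 he' with rfl | he'
    · rw [Finset.erase_insert heB, he]
      intro h'
      obtain ⟨c, hc, hc'⟩ := exists_reach_merge G hab he B h'
      exact h c hc hc'
    · exact fun h' => h e' he' ((key e' he').1 h')

lemma not_isForest_of_loop [Finite V] (G : Multigraph V E) {A : Finset E} {e : E} (heA : e ∈ A)
    (he : (G.ends e).1 = (G.ends e).2) : ¬ G.IsForest A := by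
  rw [isForest_iff]
  intro h
  exact h e heA (he ▸ G.reach_refl _ _)

lemma mergeMap_val {a b : V} (hab : b ≠ a) (w : {w : V // w ≠ a}) :
    mergeMap a b hab w = w := by
  simp [mergeMap, w.2]

lemma mergeMap_eq_iff {a b : V} (hab : b ≠ a) (v : V) (w : {w : V // w ≠ a}) :
    mergeMap a b hab v = w ↔ v = w ∨ (v = a ∧ (w : V) = b) := by
  have := w.2
  unfold mergeMap
  split_ifs with h
  · subst h
    simp [Subtype.ext_iff, Ne.symm this, eq_comm]
  · simp [Subtype.ext_iff, h]

/-- `mergeQ` is the pushforward of the vertex weights along `mergeMap`. -/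
lemma mergeQ_eq_sum [Fintype V] (q : V → ℝ) {a b : V} (hab : b ≠ a) (w : {w : V // w ≠ a}) :
    mergeQ q a b w = ∑ v, if mergeMap a b hab v = w then q v else 0 := by
  have : ∀ v, (if mergeMap a b hab v = w then q v else 0) =
      (if v = w then q v else 0) + (if v = a then (if (w : V) = b then q a else 0) else 0) := by
    intro v
    have hw := w.2
    simp only [mergeMap_eq_iff]
    by_cases h1 : v = w
    · have : v ≠ a := h1 ▸ hw
      simp [h1, hw]
    · by_cases h2 : v = a
      · subst h2; simp [h1]
      · simp [h1, h2]
  simp_rw [this, Finset.sum_add_distrib]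
  simp [mergeQ]

/-- The components of `(V, insert e B)` and of `B` in the contracted graph correspond, with equal
weights. -/
lemma prod_qComp_merge [Fintype V] (G : Multigraph V E) {B : Finset E} {e : E} {a b : V}
    (hab : b ≠ a) (he : G.ends e = (a, b)) (q : V → ℝ) :
    ∏ c, G.qComp (insert e B) q c = ∏ c, (G.merge a b hab).qComp B (mergeQ q a b) c := by
  let φ : Quotient (G.compSetoid (insert e B)) → Quotient ((G.merge a b hab).compSetoid B) :=
    Quotient.map (mergeMap a b hab) fun _ _ h => (reach_merge_iff G hab he).2 h
  have hφ : Function.Bijective φ := by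
    constructor
    · intro c c'
      induction c using Quotient.inductionOn with
      | h v =>
      induction c' using Quotient.inductionOn with
      | h w =>
        intro h
        exact mk_eq_mk_iff.2 ((reach_merge_iff G hab he).1 (mk_eq_mk_iff.1 h))
    · intro c
      induction c using Quotient.inductionOn with
      | h w => exact ⟨Quotient.mk _ (w : V), congrArg (Quotient.mk _) (mergeMap_val hab w)⟩
  refine Fintype.prod_bijective φ hφ _ _ fun c => ?_
  unfold qComp
  simp_rw [mergeQ_eq_sum q hab]
  rw [Finset.sum_comm, Finset.sum_filter]
  refine Finset.sum_congr rfl fun v _ => ?_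
  rw [Finset.sum_ite_eq]
  have : φ (Quotient.mk _ v) = φ c ↔ Quotient.mk _ v = c := hφ.1.eq_iff
  simp only [Finset.mem_filter, Finset.mem_univ, true_and]
  exact if_congr this.symm rfl rfl

end Multigraph

/-! ### Determinants -/

/-- The rows other than `a` of the elementary matrix that adds row `a` to row `b`. -/
noncomputable def mergeMat {V : Type} (a b : V) : Matrix {w : V // w ≠ a} V ℝ :=
  Matrix.of fun w v => (if (w : V) = v then 1 else 0) + if (w : V) = b ∧ v = a then 1 else 0

/-- A rank-one perturbation by `(δ_a - δ_b)(δ_a - δ_b)ᵀ` changes the determinant by the determinant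
of the matrix in which row and column `a` are added to row and column `b` and then dropped. -/
lemma det_add_smul_vecMulVec {V : Type} [Fintype V] (M : Matrix V V ℝ) (x : ℝ) {a b : V}
    (hab : b ≠ a) (u : V → ℝ) (hu : u = Pi.single a 1 - Pi.single b 1) :
    (M + x • Matrix.vecMulVec u u).det =
      M.det + x * (mergeMat a b * M * (mergeMat a b).transpose).det := by
  set P : Matrix V V ℝ := Matrix.transvection b a 1 with hP
  have hPdet : P.det = 1 := Matrix.det_transvection_of_ne b a hab 1
  set K : Matrix V V ℝ := P * M * P.transpose with hK
  have hdet : ∀ N : Matrix V V ℝ, N.det = (P * N * P.transpose).det := by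
    intro N
    simp [Matrix.det_mul, hPdet]
  have hPu : P.mulVec u = Pi.single a 1 := by
    rw [hP, hu, Matrix.transvection, Matrix.add_mulVec, Matrix.one_mulVec, Matrix.single_mulVec]
    ext i
    by_cases h : i = b
    · subst h; simp [Function.update, hab, hab.symm]
    · simp [Function.update, Pi.single_apply, h, hab.symm]
  have hpert : P * (M + x • Matrix.vecMulVec u u) * P.transpose =
      K.updateRow a (K a + x • Pi.single a 1) := by
    rw [Matrix.mul_add, Matrix.add_mul, ← hK, Matrix.mul_smul, Matrix.smul_mul,
      Matrix.mul_vecMulVec, Matrix.vecMulVec_mul, Matrix.vecMul_transpose, hPu]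
    ext i j
    by_cases h : i = a
    · subst h; simp [Matrix.vecMulVec_apply]
    · simp [Matrix.vecMulVec_apply, h]
  have hminor : (K.updateRow a (Pi.single a 1)).det =
      (mergeMat a b * M * (mergeMat a b).transpose).det := by
    rw [Matrix.twoBlockTriangular_det' _ (fun v => v = a)]
    · have h1 : (Matrix.toSquareBlockProp (K.updateRow a (Pi.single a 1))
          (fun v => v = a)).det = 1 := by
        have : Matrix.toSquareBlockProp (K.updateRow a (Pi.single a 1)) (fun v => v = a) = 1 := by
          ext ⟨i, hi⟩ ⟨j, hj⟩
          subst hi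
          subst hj
          simp [Matrix.toSquareBlockProp]
        rw [this, Matrix.det_one]
      have h2 : Matrix.toSquareBlockProp (K.updateRow a (Pi.single a 1)) (fun v => ¬ v = a) =
          mergeMat a b * M * (mergeMat a b).transpose := by
        have hC : mergeMat a b = P.submatrix (fun w : {w : V // w ≠ a} => (w : V)) id := by
          ext w v
          simp only [mergeMat, hP, Matrix.transvection, Matrix.of_apply, Matrix.submatrix_apply,
            id, Matrix.add_apply, Matrix.one_apply, Matrix.single_apply]
          congr 1
          exact if_congr (by constructor <;> (rintro ⟨h, h'⟩; exact ⟨h.symm, h'.symm⟩)) rfl rfl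
        ext i j
        simp only [Matrix.toSquareBlockProp, Matrix.toBlock_apply, hC]
        rw [Matrix.updateRow_ne i.2]
        rfl
      rw [← h2]
      refine (congrArg (· * _) (Eq.trans ?_ h1)).trans (one_mul _)
      congr!
    · rintro i rfl j hj
      simp [hj]
  rw [hdet (M + _), hpert, Matrix.det_updateRow_add, Matrix.det_updateRow_smul,
    Matrix.updateRow_eq_self, hminor, ← hdet M]

namespace Multigraph

variable {V E : Type}

/-- The Schrödinger matrix with edge weights `x`, where only the edges of `s` are kept. -/
noncomputable def edgeMat (G : Multigraph V E) (s : Finset E) (x : E → ℝ) (q : V → ℝ) :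
    Matrix V V ℝ :=
  ∑ e ∈ s, x e • Matrix.vecMulVec (G.eps e) (G.eps e) + Matrix.diagonal q

lemma mergeMat_apply {a b : V} (hab : b ≠ a) (w : {w : V // w ≠ a}) (v : V) :
    mergeMat a b w v = if mergeMap a b hab v = w then 1 else 0 := by
  have hw := w.2
  simp only [mergeMat, Matrix.of_apply, mergeMap_eq_iff]
  by_cases h2 : v = a
  · subst h2; simp [hw, Ne.symm hw]
  · simp [h2, eq_comm]

lemma mergeMat_mulVec_eps [Fintype V] (G : Multigraph V E) {a b : V} (hab : b ≠ a) (e : E) :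
    (mergeMat a b).mulVec (G.eps e) = (G.merge a b hab).eps e := by
  ext w
  simp only [Matrix.mulVec, dotProduct, mergeMat_apply hab, eps, merge, mul_sub,
    Finset.sum_sub_distrib, mul_ite, mul_one, mul_zero, Finset.sum_ite_eq, Finset.mem_univ, if_true]
  -- The two sides differ only in their decidability instances.
  have key : ∀ (p : Prop) (i j : Decidable p), @ite ℝ p i 1 0 = @ite ℝ p j 1 0 :=
    fun p i j => by rw [Subsingleton.elim i j]
  exact congrArg₂ (· - ·) (key _ _ _) (key _ _ _)

lemma edgeMat_merge [Fintype V] (G : Multigraph V E) (s : Finset E) (x : E → ℝ) (q : V → ℝ)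
    {a b : V} (hab : b ≠ a) :
    mergeMat a b * G.edgeMat s x q * (mergeMat a b).transpose =
      (G.merge a b hab).edgeMat s x (mergeQ q a b) := by
  unfold edgeMat
  rw [Matrix.mul_add, Matrix.add_mul, Matrix.mul_sum, Matrix.sum_mul]
  congr 1
  · refine Finset.sum_congr rfl fun e _ => ?_
    rw [Matrix.mul_smul, Matrix.smul_mul, Matrix.mul_vecMulVec, Matrix.vecMulVec_mul,
      Matrix.vecMul_transpose, mergeMat_mulVec_eps G hab]
  · ext w w'
    rw [Matrix.mul_apply]
    simp only [Matrix.mul_diagonal, Matrix.transpose_apply, mergeMat_apply hab,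
      Matrix.diagonal_apply]
    split_ifs with h
    · subst h
      rw [mergeQ_eq_sum q hab]
      exact Finset.sum_congr rfl fun v _ => by split_ifs <;> simp
    · refine Finset.sum_eq_zero fun v _ => ?_
      by_cases h1 : mergeMap a b hab v = w
      · simp [h1, h]
      · simp [h1]

lemma prod_qComp_empty [Fintype V] (G : Multigraph V E) (q : V → ℝ) :
    ∏ c, G.qComp ∅ q c = ∏ v, q v := by
  have hr : ∀ v w, Quotient.mk (G.compSetoid ∅) v = Quotient.mk (G.compSetoid ∅) w ↔ v = w :=
    fun v w => ⟨fun h => (mk_eq_mk_iff.1 h).induct eq_equivalence (by simp), fun h => h ▸ rfl⟩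
  symm
  refine Fintype.prod_bijective (Quotient.mk (G.compSetoid ∅))
    ⟨fun v w => (hr v w).1, Quotient.mk_surjective⟩ _ _ fun v => ?_
  unfold qComp
  have : (Finset.univ.filter fun w =>
      Quotient.mk (G.compSetoid ∅) w = Quotient.mk (G.compSetoid ∅) v) = {v} := by
    ext w
    rw [Finset.mem_filter, Finset.mem_singleton, hr]
    simp
  rw [this, Finset.sum_singleton]

/-- The forest expansion of `det H`, with edge weights `x` in place of `1 / α`. -/
lemma det_edgeMat (x : E → ℝ) (s : Finset E) :
    ∀ (V : Type) [Fintype V] (G : Multigraph V E) (q : V → ℝ),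
      (G.edgeMat s x q).det =
        ∑ A ∈ s.powerset, if G.IsForest A then (∏ e ∈ A, x e) * ∏ c, G.qComp A q c else 0 := by
  induction s using Finset.induction_on with
  | empty =>
    intro V _ G q
    have : G.IsForest ∅ := fun e he => absurd he (Finset.notMem_empty e)
    simp [edgeMat, this, prod_qComp_empty]
  | insert e s hes ih =>
    intro V _ G q
    have hM : G.edgeMat (insert e s) x q =
        G.edgeMat s x q + x e • Matrix.vecMulVec (G.eps e) (G.eps e) := by
      unfold edgeMat
      rw [Finset.sum_insert hes]
      abel
    rw [hM, Finset.sum_powerset_insert hes]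
    by_cases hl : (G.ends e).1 = (G.ends e).2
    · have h0 : G.eps e = 0 := by
        ext v
        simp [eps, hl]
      have hz : ∀ A ∈ s.powerset, (if G.IsForest (insert e A) then
          (∏ e ∈ insert e A, x e) * ∏ c, G.qComp (insert e A) q c else 0) = 0 := fun A _ =>
        if_neg (G.not_isForest_of_loop (Finset.mem_insert_self e A) hl)
      rw [Finset.sum_eq_zero hz, h0, ← ih]
      simp
    · obtain ⟨a, b, he⟩ : ∃ a b, G.ends e = (a, b) := ⟨_, _, rfl⟩
      have hab : b ≠ a := by
        rintro rfl
        simp [he] at hl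
      have hu : G.eps e = Pi.single a 1 - Pi.single b 1 := by
        ext v
        simp [eps, he, Pi.single_apply, eq_comm]
      have ih' : ((G.merge a b hab).edgeMat s x (mergeQ q a b)).det =
          ∑ A ∈ s.powerset, if (G.merge a b hab).IsForest A then
            (∏ e ∈ A, x e) * ∏ c, (G.merge a b hab).qComp A (mergeQ q a b) c else 0 := by
        convert ih {w : V // w ≠ a} (G.merge a b hab) (mergeQ q a b)
      rw [det_add_smul_vecMulVec _ _ hab _ hu, edgeMat_merge G s x q hab, ih, ih', Finset.mul_sum]
      congr 1
      refine Finset.sum_congr rfl fun A hA => ?_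
      have heA : e ∉ A := fun h => hes (Finset.mem_powerset.1 hA h)
      rw [prod_qComp_merge G hab he, Finset.prod_insert heA, mul_ite, mul_zero, mul_assoc]
      exact if_congr (isForest_insert_iff G hab he heA).symm rfl rfl

end Multigraph

/-- `(Π_e α_e) · det H = 𝒰_G(α, q)` for the discrete Schrödinger
operator `H` with edge weights `1/α_e` and vertex potential `q`. -/
theorem det_HMat_eq_genU {V E : Type} [Fintype V] [Fintype E] [DecidableEq V] [DecidableEq E]
    (G : Multigraph V E) (α : E → ℝ) (hα : ∀ e, 0 < α e) (q : V → ℝ) :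
    (∏ e : E, α e) * (G.HMat α q).det = G.genU α q := by
  have hM : G.HMat α q = G.edgeMat Finset.univ (fun e => 1 / α e) q := by
    ext v w
    simp [Multigraph.HMat, Multigraph.edgeMat, Matrix.sum_apply, Matrix.vecMulVec_apply,
      Matrix.diagonal_apply, mul_assoc]
  have hdet := Multigraph.det_edgeMat (fun e => 1 / α e) Finset.univ V G q
  have hdec : ∀ i j : DecidableEq V, @Matrix.det V i _ ℝ _ (G.HMat α q) =
      @Matrix.det V j _ ℝ _ (G.HMat α q) := fun i j => by rw [Subsingleton.elim i j]
  rw [← hM] at hdet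
  rw [hdec _ _, hdet, Finset.mul_sum, Multigraph.genU, Finset.sum_filter, Finset.powerset_univ]
  refine Finset.sum_congr rfl fun A _ => ?_
  have hprod : (∏ e, α e) * ∏ e ∈ A, (1 / α e) = ∏ e ∈ Finset.univ \ A, α e := by
    rw [← Finset.prod_sdiff (Finset.subset_univ A), mul_assoc, ← Finset.prod_mul_distrib,
      Finset.prod_eq_one (s := A) fun e _ => mul_one_div_cancel (hα e).ne', mul_one]
  rw [mul_ite, mul_zero, ← mul_assoc, hprod]
  congr!
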